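/- arXiv:0902.4036 — 2 statements merged into one kernel-verified Lean document; each statement's English description precedes it below -/
import Mathlib

section
/- If a primitive P on a finite product 𝒳×𝒴 satisfies Δ_P = 0, where Δ_P is the infimum over all phase functions θ of the leakage Δ(ψ_θ), then P is trivial, i.e. H(X↘Y|Y) = 0. -/
open scoped BigOperators
open Matrix

noncomputable section

open scoped Classical in
/-- Base-2 von Neumann entropy of a matrix: minus the sum of `λ·log₂ λ` over the real
eigenvalues (with multiplicity) if the matrix is Hermitian, and `0` otherwise. -/
def vNE {n : Type*} [Fintype n] (ρ : Matrix n n ℂ) : ℝ :=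
  if h : ρ.IsHermitian then -∑ i, h.eigenvalues i * Real.logb 2 (h.eigenvalues i) else 0

/-- Shannon entropy (base 2), with the convention `0·log₂ 0 = 0`. -/
def shannon {α : Type*} [Fintype α] (p : α → ℝ) : ℝ :=
  -∑ a, p a * Real.logb 2 (p a)

/-- Marginal on the first component: `P_X`. -/
def margX {X Y : Type*} [Fintype Y] (P : X × Y → ℝ) (x : X) : ℝ := ∑ y, P (x, y)

/-- Marginal on the second component: `P_Y`. -/
def margY {X Y : Type*} [Fintype X] (P : X × Y → ℝ) (y : Y) : ℝ := ∑ x, P (x, y)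

/-- Mutual information `I(X;Y)` of a joint distribution `P` (base 2). -/
def mutualInfo {X Y : Type*} [Fintype X] [Fintype Y] (P : X × Y → ℝ) : ℝ :=
  ∑ x, ∑ y, P (x, y) * Real.logb 2 (P (x, y) / (margX P x * margY P y))

/-- The regular embedding `ψ_θ(x,y) = e^{iθ(x,y)}·√(P(x,y))`. -/
def regEmb {X Y : Type*} (P θ : X × Y → ℝ) (xy : X × Y) : ℂ :=
  Complex.exp (Complex.I * θ xy) * (Real.sqrt (P xy) : ℂ)

/-- Reduced density matrix `ρ_A(θ)` of the regular embedding `ψ_θ`. -/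
def rhoA {X Y : Type*} [Fintype Y] (P θ : X × Y → ℝ) : Matrix X X ℂ :=
  Matrix.of fun x x' => ∑ y, regEmb P θ (x, y) * star (regEmb P θ (x', y))

/-- Reduced density matrix `ρ_B(θ)` of the regular embedding `ψ_θ`. -/
def rhoB {X Y : Type*} [Fintype X] (P θ : X × Y → ℝ) : Matrix Y Y ℂ :=
  Matrix.of fun y y' => ∑ x, regEmb P θ (x, y) * star (regEmb P θ (x, y'))

/-- Leakage `Δ(ψ_θ) = S(ρ_B(θ)) − I(X;Y)` of a regular embedding. -/
def leakReg {X Y : Type*} [Fintype X] [Fintype Y] (P θ : X × Y → ℝ) : ℝ :=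
  vNE (rhoB P θ) - mutualInfo P

/-- Leakage `Δ_P` of a primitive: the infimum of the leakage over all phase functions. -/
def leakPrim {X Y : Type*} [Fintype X] [Fintype Y] (P : X × Y → ℝ) : ℝ :=
  ⨅ θ : X × Y → ℝ, leakReg P θ

/-- `f_X(x) = P_{Y|X=x}`, the conditional distribution of `Y` given `X = x`. -/
def fX {X Y : Type*} [Fintype Y] (P : X × Y → ℝ) (x : X) : Y → ℝ :=
  fun y => P (x, y) / margX P x

/-- `f_Y(y) = P_{X|Y=y}`, the conditional distribution of `X` given `Y = y`. -/
def fY {X Y : Type*} [Fintype X] (P : X × Y → ℝ) (y : Y) : X → ℝ :=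
  fun x => P (x, y) / margY P y

open scoped Classical in
/-- Shannon entropy `H(P_{f_X(X),Y})` of the joint distribution of the pair `(f_X(X), Y)`. -/
def entDepJoint {X Y : Type*} [Fintype X] [Fintype Y] (P : X × Y → ℝ) : ℝ :=
  -∑ k ∈ Finset.image (fX P) Finset.univ, ∑ y,
      (∑ x ∈ Finset.univ.filter fun x => fX P x = k, P (x, y)) *
        Real.logb 2 (∑ x ∈ Finset.univ.filter fun x => fX P x = k, P (x, y))

/-- Conditional Shannon entropy `H(X↘Y|Y) = H(P_{f_X(X),Y}) − H(P_Y)`. -/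
def condEntDep {X Y : Type*} [Fintype X] [Fintype Y] (P : X × Y → ℝ) : ℝ :=
  entDepJoint P - shannon (margY P)

/-- Variational lower bound for `tr (ρ (ρ + t)⁻¹)` with `ρ = A Aᴴ`, expressed through the
eigenvalues of `ρ`. -/
theorem two_re_trace_sub_le_sum_eigenvalues_div {m n : Type*} [Fintype m] [Fintype n]
    [DecidableEq n] (A V : Matrix n m ℂ) (h : (A * Aᴴ).IsHermitian) {t : ℝ} (ht : 0 < t) :
    2 * (Vᴴ * A).trace.re - (Vᴴ * A * (Vᴴ * A)ᴴ).trace.re - t * (Vᴴ * V).trace.re ≤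
      ∑ j, h.eigenvalues j / (h.eigenvalues j + t) := by
  set U : Matrix n n ℂ := (h.eigenvectorUnitary : Matrix n n ℂ) with hU
  have hUU : U * Uᴴ = 1 := Unitary.coe_mul_star_self h.eigenvectorUnitary
  have hdiag : Uᴴ * (A * Aᴴ) * U = diagonal fun j => ((h.eigenvalues j : ℝ) : ℂ) := by
    have := h.conjStarAlgAut_star_eigenvectorUnitary
    rw [Unitary.conjStarAlgAut_star_apply] at this
    exact this
  set C : Matrix n m ℂ := Uᴴ * A with hC
  set W : Matrix n m ℂ := Uᴴ * V with hW
  have hA : A = U * C := by rw [hC, ← Matrix.mul_assoc, hUU, Matrix.one_mul]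
  have hCC : C * Cᴴ = diagonal fun j => ((h.eigenvalues j : ℝ) : ℂ) := by
    rw [← hdiag, hC]
    simp [Matrix.conjTranspose_mul, Matrix.mul_assoc]
  have hVA : Vᴴ * A = Wᴴ * C := by
    rw [hA, hW]
    simp [Matrix.conjTranspose_mul, Matrix.mul_assoc]
  have hVV : Vᴴ * V = Wᴴ * W := by
    rw [hW, Matrix.conjTranspose_mul, Matrix.conjTranspose_conjTranspose, Matrix.mul_assoc,
      ← Matrix.mul_assoc U, hUU, Matrix.one_mul]
  have hVAAV : Vᴴ * A * (Vᴴ * A)ᴴ =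
      Wᴴ * (diagonal fun j => ((h.eigenvalues j : ℝ) : ℂ)) * W := by
    rw [hVA, ← hCC]
    simp [Matrix.conjTranspose_mul, Matrix.mul_assoc]
  have hrow : ∀ j, ∑ x, ‖C j x‖ ^ 2 = h.eigenvalues j := by
    intro j
    have := congrArg Complex.re (congrFun (congrFun hCC j) j)
    simpa only [Matrix.mul_apply, Matrix.conjTranspose_apply, Complex.star_def, Complex.mul_conj,
      Complex.normSq_eq_norm_sq, Matrix.diagonal_apply_eq, Complex.re_sum, Complex.ofReal_re]
      using this
  have hnonneg : ∀ j, 0 ≤ h.eigenvalues j := fun j =>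
    hrow j ▸ Finset.sum_nonneg fun x _ => sq_nonneg _
  have e₁ : (Vᴴ * A).trace.re = ∑ j, ∑ x, (star (W j x) * C j x).re := by
    rw [hVA, Finset.sum_comm]
    simp [Matrix.trace, Matrix.mul_apply]
  have e₂ : (Vᴴ * V).trace.re = ∑ j, ∑ x, ‖W j x‖ ^ 2 := by
    rw [hVV, Finset.sum_comm]
    simp only [Matrix.trace, Matrix.diag, Matrix.mul_apply, Complex.re_sum,
      Matrix.conjTranspose_apply, ← Complex.normSq_eq_norm_sq, Complex.normSq_apply]
    simp
  have e₃ : (Vᴴ * A * (Vᴴ * A)ᴴ).trace.re = ∑ j, ∑ x, h.eigenvalues j * ‖W j x‖ ^ 2 := by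
    rw [hVAAV, Finset.sum_comm]
    simp only [Matrix.trace, Matrix.diag, Complex.re_sum, ← Complex.normSq_eq_norm_sq,
      Complex.normSq_apply]
    refine Finset.sum_congr rfl fun x _ => ?_
    rw [Matrix.mul_apply, Complex.re_sum]
    refine Finset.sum_congr rfl fun j _ => ?_
    rw [Matrix.mul_diagonal]
    simp
    ring
  rw [e₁, e₂, e₃, Finset.mul_sum, Finset.mul_sum, ← Finset.sum_sub_distrib,
    ← Finset.sum_sub_distrib]
  refine Finset.sum_le_sum fun j _ => ?_
  rw [Finset.mul_sum, Finset.mul_sum, ← Finset.sum_sub_distrib, ← Finset.sum_sub_distrib]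
  have hpos : 0 < h.eigenvalues j + t := by linarith [hnonneg j]
  conv_rhs => rw [← hrow j, Finset.sum_div]
  rw [hrow j]
  refine Finset.sum_le_sum fun x _ => ?_
  rw [le_div_iff₀ hpos]
  generalize h.eigenvalues j = l at hpos
  simp only [← Complex.normSq_eq_norm_sq, Complex.normSq_apply, Complex.mul_re, Complex.star_def,
    Complex.conj_re, Complex.conj_im]
  nlinarith [sq_nonneg ((C j x).re - (l + t) * (W j x).re),
    sq_nonneg ((C j x).im - (l + t) * (W j x).im)]

/-- A quantitative Cauchy–Schwarz inequality, with one term of Lagrange's identity as remainder. -/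
theorem sum_mul_sq_add_sq_le {ι : Type*} [Fintype ι] (f g : ι → ℝ) (y z : ι) :
    (∑ i, f i * g i) ^ 2 + (f y * g z - f z * g y) ^ 2 ≤ (∑ i, f i ^ 2) * ∑ i, g i ^ 2 := by
  classical
  have hid : ∑ i, ∑ j, (f i * g j - f j * g i) ^ 2 =
      2 * ((∑ i, f i ^ 2) * ∑ i, g i ^ 2) - 2 * (∑ i, f i * g i) ^ 2 := by
    have hexp : ∀ i j, (f i * g j - f j * g i) ^ 2 =
        f i ^ 2 * g j ^ 2 + f j ^ 2 * g i ^ 2 - 2 * ((f i * g i) * (f j * g j)) :=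
      fun i j => by ring
    simp only [hexp, Finset.sum_sub_distrib, Finset.sum_add_distrib, ← Finset.mul_sum,
      ← Finset.sum_mul]
    ring
  have hnn : ∀ i j, 0 ≤ (f i * g j - f j * g i) ^ 2 := fun i j => sq_nonneg _
  rcases eq_or_ne y z with rfl | hyz
  · have : 0 ≤ ∑ i, ∑ j, (f i * g j - f j * g i) ^ 2 :=
      Finset.sum_nonneg fun i _ => Finset.sum_nonneg fun j _ => hnn i j
    nlinarith
  · have hterm : ∀ i j, (f i * g j - f j * g i) ^ 2 ≤ ∑ j, (f i * g j - f j * g i) ^ 2 :=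
      fun i j => Finset.single_le_sum (f := fun j => (f i * g j - f j * g i) ^ 2)
        (fun j _ => hnn i j) (Finset.mem_univ j)
    have hpair : ∑ i ∈ {y, z}, ∑ j, (f i * g j - f j * g i) ^ 2 ≤
        ∑ i, ∑ j, (f i * g j - f j * g i) ^ 2 :=
      Finset.sum_le_sum_of_subset_of_nonneg (Finset.subset_univ _)
        fun i _ _ => Finset.sum_nonneg fun j _ => hnn i j
    rw [Finset.sum_pair hyz] at hpair
    have h₁ := hterm y z
    have h₂ := hterm z y
    nlinarith

/-- Comparison of two weighted sums of logarithms obtained by integrating a comparison of the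
corresponding resolvent sums; a gap `c` on `[a, b]` contributes `c * (b - a)`. -/
theorem sum_mul_log_add_le_of_resolvent {ι κ : Type*} [Fintype ι] [Fintype κ]
    {l : κ → ℝ} {p r : ι → ℝ} (hl : ∀ j, 0 ≤ l j) (hp : ∀ i, 0 ≤ p i) (hr : ∀ i, 0 ≤ r i)
    (hpr : ∀ i, p i ≠ 0 → r i ≠ 0) (hsum : ∑ j, l j = ∑ i, p i)
    {a b c : ℝ} (ha : 0 < a) (hab : a ≤ b)
    (hres : ∀ t, 0 < t → ∑ i, p i / (r i + t) ≤ ∑ j, l j / (l j + t))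
    (hgap : ∀ t ∈ Set.Icc a b, ∑ i, p i / (r i + t) + c ≤ ∑ j, l j / (l j + t)) :
    ∑ j, l j * Real.log (l j) + c * (b - a) ≤ ∑ i, p i * Real.log (r i) := by
  set G : ℝ → ℝ := fun t => ∑ j, l j * Real.log (l j + t) - ∑ i, p i * Real.log (r i + t) with hG
  have hcont : ContinuousOn G (Set.Ici 0) := by
    refine ContinuousOn.sub (continuousOn_finsetSum _ fun j _ => ?_)
      (continuousOn_finsetSum _ fun i _ => ?_)
    · rcases eq_or_ne (l j) 0 with h0 | h0
      · simpa [h0] using continuousOn_const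
      · refine continuousOn_const.mul (ContinuousOn.log (by fun_prop) fun t ht => ?_)
        have := (hl j).lt_of_ne' h0
        have : (0 : ℝ) ≤ t := ht
        positivity
    · rcases eq_or_ne (p i) 0 with h0 | h0
      · simpa [h0] using continuousOn_const
      · refine continuousOn_const.mul (ContinuousOn.log (by fun_prop) fun t ht => ?_)
        have := (hr i).lt_of_ne' (hpr i h0)
        have : (0 : ℝ) ≤ t := ht
        positivity
  have hderiv : ∀ t, 0 < t →
      HasDerivAt G (∑ j, l j / (l j + t) - ∑ i, p i / (r i + t)) t := by
    intro t ht
    have key : ∀ u v : ℝ, 0 ≤ v → HasDerivAt (fun t => u * Real.log (v + t)) (u / (v + t)) t := by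
      intro u v hv
      have := (((hasDerivAt_id t).const_add v).log (by simp only [id]; positivity)).const_mul u
      simpa [div_eq_mul_inv] using this
    exact (HasDerivAt.fun_sum fun j _ => key _ _ (hl j)).sub
      (HasDerivAt.fun_sum fun i _ => key _ _ (hr i))
  have hmono : MonotoneOn G (Set.Ici 0) := by
    refine monotoneOn_of_deriv_nonneg (convex_Ici 0) hcont ?_ ?_
    · intro t ht
      rw [interior_Ici] at ht
      exact (hderiv t ht).differentiableAt.differentiableWithinAt
    · intro t ht
      rw [interior_Ici] at ht
      rw [(hderiv t ht).deriv]
      linarith [hres t ht]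
  have hstep : G a + c * (b - a) ≤ G b := by
    have := (convex_Icc a b).mul_sub_le_image_sub_of_le_deriv (f := G) (C := c)
      (hcont.mono fun t ht => ha.le.trans ht.1)
      (fun t ht => by
        rw [interior_Icc] at ht
        exact (hderiv t (ha.trans ht.1)).differentiableAt.differentiableWithinAt)
      (fun t ht => by
        rw [interior_Icc] at ht
        rw [(hderiv t (ha.trans ht.1)).deriv]
        linarith [hgap t ⟨ht.1.le, ht.2.le⟩])
      a (Set.left_mem_Icc.2 hab) b (Set.right_mem_Icc.2 hab) hab
    linarith
  have htail : ∀ T, 0 < T → G T ≤ (∑ j, l j * l j) / T := by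
    intro T hT
    have h₁ : ∑ j, l j * Real.log (l j + T) ≤ ∑ j, (l j * Real.log T + l j * l j / T) := by
      refine Finset.sum_le_sum fun j _ => ?_
      have hq : 0 < (l j + T) / T := by have := hl j; positivity
      have hlog := Real.log_le_sub_one_of_pos hq
      rw [Real.log_div (by have := hl j; positivity) hT.ne', add_div, div_self hT.ne'] at hlog
      have := mul_le_mul_of_nonneg_left (show Real.log (l j + T) ≤ Real.log T + l j / T by
        linarith) (hl j)
      rwa [mul_add, ← mul_div_assoc] at this
    have h₂ : ∑ i, p i * Real.log T ≤ ∑ i, p i * Real.log (r i + T) :=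
      Finset.sum_le_sum fun i _ => mul_le_mul_of_nonneg_left
        (Real.log_le_log hT (by linarith [hr i])) (hp i)
    rw [Finset.sum_add_distrib, ← Finset.sum_mul, ← Finset.sum_div, hsum, Finset.sum_mul] at h₁
    simp only [hG]
    linarith
  have hGb : G b ≤ 0 := by
    have hlim : Filter.Tendsto (fun T : ℝ => (∑ j, l j * l j) / T) Filter.atTop (nhds 0) :=
      Filter.Tendsto.div_atTop tendsto_const_nhds Filter.tendsto_id
    refine ge_of_tendsto hlim ?_
    filter_upwards [Filter.eventually_ge_atTop b] with T hT
    have hb : 0 < b := ha.trans_le hab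
    exact (hmono hb.le (hb.le.trans hT) hT).trans (htail T (hb.trans_le hT))
  have h0a : G 0 ≤ G a := hmono (Set.mem_Ici.2 le_rfl) ha.le ha.le
  have hG0 : G 0 = ∑ j, l j * Real.log (l j) - ∑ i, p i * Real.log (r i) := by simp [hG]
  linarith

/-- The weight `P(x,y) / (P_X(x) P_Y(y) + t P(x,y))`, which is `(P_X(x) P_Y(y) / P(x,y) + t)⁻¹` on
the support of `P` and `0` elsewhere. -/
def resolventWeight {X Y : Type*} [Fintype X] [Fintype Y] (P : X × Y → ℝ) (t : ℝ) (x : X) (y : Y) :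
    ℝ :=
  P (x, y) / (margX P x * margY P y + t * P (x, y))

section Primitive

variable {X Y : Type*} {P : X × Y → ℝ}

theorem margX_nonneg [Fintype Y] (hP : ∀ xy, 0 ≤ P xy) (x : X) : 0 ≤ margX P x :=
  Finset.sum_nonneg fun _ _ => hP _

theorem margY_nonneg [Fintype X] (hP : ∀ xy, 0 ≤ P xy) (y : Y) : 0 ≤ margY P y :=
  Finset.sum_nonneg fun _ _ => hP _

theorem le_margX [Fintype Y] (hP : ∀ xy, 0 ≤ P xy) (x : X) (y : Y) : P (x, y) ≤ margX P x :=
  Finset.single_le_sum (f := fun y => P (x, y)) (fun _ _ => hP _) (Finset.mem_univ y)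

theorem le_margY [Fintype X] (hP : ∀ xy, 0 ≤ P xy) (x : X) (y : Y) : P (x, y) ≤ margY P y :=
  Finset.single_le_sum (f := fun x => P (x, y)) (fun _ _ => hP _) (Finset.mem_univ x)

theorem norm_regEmb (P θ : X × Y → ℝ) (xy : X × Y) : ‖regEmb P θ xy‖ = √(P xy) := by
  rw [regEmb, norm_mul, mul_comm Complex.I, Complex.norm_exp_ofReal_mul_I, one_mul,
    Complex.norm_of_nonneg (Real.sqrt_nonneg _)]

/-- The regular embedding as a matrix whose Gram matrix is `rhoB`. -/
def regEmbMatrix (P θ : X × Y → ℝ) : Matrix Y X ℂ :=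
  Matrix.of fun y x => regEmb P θ (x, y)

theorem rhoB_eq_mul_conjTranspose [Fintype X] (P θ : X × Y → ℝ) :
    rhoB P θ = regEmbMatrix P θ * (regEmbMatrix P θ)ᴴ := by
  ext y y'
  simp [rhoB, regEmbMatrix, Matrix.mul_apply]

/-- Cauchy–Schwarz for the weighted overlap of two rows of `P`, with remainder. -/
theorem overlap_sq_add_sq_le [Fintype Y] (hP : ∀ xy, 0 ≤ P xy) (w : Y → ℝ) (x x' : X) (y z : Y) :
    (∑ i, w i * (√(P (x, i)) * √(P (x', i)))) ^ 2 +
        (√(P (x, y)) * (w z * √(P (x', z))) - √(P (x, z)) * (w y * √(P (x', y)))) ^ 2 ≤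
      margX P x * ∑ i, w i ^ 2 * P (x', i) := by
  have h := sum_mul_sq_add_sq_le (fun i => √(P (x, i))) (fun i => w i * √(P (x', i))) y z
  simp only [mul_pow, Real.sq_sqrt (hP _)] at h
  have e : ∑ i, w i * (√(P (x, i)) * √(P (x', i))) = ∑ i, √(P (x, i)) * (w i * √(P (x', i))) :=
    Finset.sum_congr rfl fun i _ => by ring
  rw [e]
  exact h

variable [Fintype X] [Fintype Y]

theorem margX_mul_margY_pos (hP : ∀ xy, 0 ≤ P xy) {x : X} {y : Y} (h : P (x, y) ≠ 0) :
    0 < margX P x * margY P y := by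
  have h0 := (hP (x, y)).lt_of_ne' h
  exact mul_pos (h0.trans_le (le_margX hP x y)) (h0.trans_le (le_margY hP x y))

theorem resolventWeight_nonneg (hP : ∀ xy, 0 ≤ P xy) {t : ℝ} (ht : 0 < t) (x : X) (y : Y) :
    0 ≤ resolventWeight P t x y :=
  div_nonneg (hP _) (add_nonneg (mul_nonneg (margX_nonneg hP x) (margY_nonneg hP y))
    (mul_nonneg ht.le (hP _)))

theorem resolventWeight_mul (hP : ∀ xy, 0 ≤ P xy) {t : ℝ} (ht : 0 < t) (x : X) (y : Y) :
    resolventWeight P t x y * (margX P x * margY P y + t * P (x, y)) = P (x, y) := by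
  rcases eq_or_ne (P (x, y)) 0 with h | h
  · simp [resolventWeight, h]
  · have := margX_mul_margY_pos hP h
    have := hP (x, y)
    exact div_mul_cancel₀ _ (by positivity)

theorem mul_resolventWeight_eq (hP : ∀ xy, 0 ≤ P xy) {t : ℝ} (ht : 0 < t) (x : X) (y : Y) :
    P (x, y) / (margX P x * margY P y / P (x, y) + t) = P (x, y) * resolventWeight P t x y := by
  rcases eq_or_ne (P (x, y)) 0 with h | h
  · simp [h]
  · have h₁ := margX_mul_margY_pos hP h
    have h₂ := (hP (x, y)).lt_of_ne' h
    rw [resolventWeight]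
    field_simp

/-- Phase-independent lower bound for the resolvent sum of the eigenvalues of `rhoB`. -/
theorem sum_mul_resolventWeight_add_sq_le (hP : ∀ xy, 0 ≤ P xy) [DecidableEq Y]
    (θ : X × Y → ℝ) (h : (rhoB P θ).IsHermitian) {t : ℝ} (ht : 0 < t) (x x' : X) (y z : Y) :
    ∑ xy : X × Y, P xy / (margX P xy.1 * margY P xy.2 / P xy + t) +
        (√(P (x, y)) * (resolventWeight P t x z * √(P (x', z))) -
          √(P (x, z)) * (resolventWeight P t x y * √(P (x', y)))) ^ 2 ≤
      ∑ j, h.eigenvalues j / (h.eigenvalues j + t) := by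
  set w := resolventWeight P t with hw
  set A := regEmbMatrix P θ with hA
  set V : Matrix Y X ℂ := Matrix.of fun y x => (w x y : ℂ) * regEmb P θ (x, y) with hV
  have hnorm : ∀ xy, ‖regEmb P θ xy‖ ^ 2 = P xy := fun xy => by
    rw [norm_regEmb, Real.sq_sqrt (hP xy)]
  have hvar : 2 * (Vᴴ * A).trace.re - (Vᴴ * A * (Vᴴ * A)ᴴ).trace.re - t * (Vᴴ * V).trace.re ≤
      ∑ j, h.eigenvalues j / (h.eigenvalues j + t) := by
    revert h
    rw [rhoB_eq_mul_conjTranspose]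
    exact fun h => two_re_trace_sub_le_sum_eigenvalues_div A V h ht
  have e₁ : (Vᴴ * A).trace.re = ∑ x, ∑ y, w x y * P (x, y) := by
    simp only [Matrix.trace, Matrix.diag, Matrix.mul_apply, Complex.re_sum]
    refine Finset.sum_congr rfl fun x _ => Finset.sum_congr rfl fun y _ => ?_
    rw [← hnorm, ← Complex.normSq_eq_norm_sq, Complex.normSq_apply]
    simp [hV, hA, regEmbMatrix]
    ring
  have e₂ : (Vᴴ * V).trace.re = ∑ x, ∑ y, w x y ^ 2 * P (x, y) := by
    simp only [Matrix.trace, Matrix.diag, Matrix.mul_apply, Complex.re_sum]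
    refine Finset.sum_congr rfl fun x _ => Finset.sum_congr rfl fun y _ => ?_
    rw [← hnorm, ← Complex.normSq_eq_norm_sq, Complex.normSq_apply]
    simp [hV]
    ring
  have e₃ : (Vᴴ * A * (Vᴴ * A)ᴴ).trace.re = ∑ x, ∑ x', ‖(Vᴴ * A) x x'‖ ^ 2 := by
    generalize Vᴴ * A = M
    simp only [Matrix.trace, Matrix.diag, Matrix.mul_apply, Complex.re_sum,
      Matrix.conjTranspose_apply, Complex.star_def, Complex.mul_conj, Complex.ofReal_re,
      Complex.normSq_eq_norm_sq]
  have hentry : ∀ x x', ‖(Vᴴ * A) x x'‖ ^ 2 ≤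
      (∑ i, w x i * (√(P (x, i)) * √(P (x', i)))) ^ 2 := by
    intro x x'
    refine pow_le_pow_left₀ (norm_nonneg _) ?_ 2
    rw [Matrix.mul_apply]
    refine (norm_sum_le _ _).trans_eq (Finset.sum_congr rfl fun i _ => ?_)
    simp only [hV, hA, regEmbMatrix, Matrix.conjTranspose_apply, Matrix.of_apply, norm_mul,
      norm_star, norm_regEmb, Complex.norm_of_nonneg (resolventWeight_nonneg hP ht x i), hw]
    ring
  set s := (√(P (x, y)) * (w x z * √(P (x', z))) - √(P (x, z)) * (w x y * √(P (x', y)))) ^ 2 with hs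
  have hoverlap : ∑ x, ∑ x', ‖(Vᴴ * A) x x'‖ ^ 2 + s ≤
      ∑ x, ∑ x', margX P x * ∑ i, w x i ^ 2 * P (x', i) := by
    have hgap : ∀ u u', 0 ≤ margX P u * ∑ i, w u i ^ 2 * P (u', i) - ‖(Vᴴ * A) u u'‖ ^ 2 :=
      fun u u' => by
        have := overlap_sq_add_sq_le hP (w u) u u' y y
        linarith [hentry u u', sq_nonneg (√(P (u, y)) * (w u y * √(P (u', y))) -
          √(P (u, y)) * (w u y * √(P (u', y))))]
    have h₁ : s ≤ margX P x * ∑ i, w x i ^ 2 * P (x', i) - ‖(Vᴴ * A) x x'‖ ^ 2 := by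
      linarith [overlap_sq_add_sq_le hP (w x) x x' y z, hentry x x']
    have h₂ := Finset.single_le_sum
      (f := fun u' => margX P x * ∑ i, w x i ^ 2 * P (u', i) - ‖(Vᴴ * A) x u'‖ ^ 2)
      (fun u' _ => hgap x u') (Finset.mem_univ x')
    have h₃ := Finset.single_le_sum
      (f := fun u => ∑ u', (margX P u * ∑ i, w u i ^ 2 * P (u', i) - ‖(Vᴴ * A) u u'‖ ^ 2))
      (fun u _ => Finset.sum_nonneg fun u' _ => hgap u u') (Finset.mem_univ x)
    have h₄ := h₁.trans (h₂.trans h₃)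
    simp only [Finset.sum_sub_distrib] at h₄
    linarith
  have hcol : ∑ x, ∑ x', margX P x * ∑ i, w x i ^ 2 * P (x', i) =
      ∑ x, ∑ y, w x y ^ 2 * (margX P x * margY P y) := by
    refine Finset.sum_congr rfl fun x _ => ?_
    rw [← Finset.mul_sum, Finset.sum_comm, Finset.mul_sum]
    refine Finset.sum_congr rfl fun y _ => ?_
    rw [← Finset.mul_sum, ← margY]
    ring
  have hmain : ∑ xy : X × Y, P xy / (margX P xy.1 * margY P xy.2 / P xy + t) =
      2 * ∑ x, ∑ y, w x y * P (x, y) - ∑ x, ∑ y, w x y ^ 2 * (margX P x * margY P y) -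
        t * ∑ x, ∑ y, w x y ^ 2 * P (x, y) := by
    rw [Fintype.sum_prod_type]
    simp only [Finset.mul_sum, ← Finset.sum_sub_distrib]
    refine Finset.sum_congr rfl fun x _ => Finset.sum_congr rfl fun y _ => ?_
    rw [mul_resolventWeight_eq hP ht, ← hw]
    linear_combination w x y * resolventWeight_mul hP ht x y
  rw [e₁, e₂, e₃] at hvar
  linarith

theorem sum_eigenvalues_rhoB (hP : ∀ xy, 0 ≤ P xy) [DecidableEq Y] (θ : X × Y → ℝ)
    (h : (rhoB P θ).IsHermitian) : ∑ j, h.eigenvalues j = ∑ xy, P xy := by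
  have htr := congrArg Complex.re h.trace_eq_sum_eigenvalues
  rw [Complex.re_sum] at htr
  simp only [Complex.coe_algebraMap, Complex.ofReal_re] at htr
  rw [← htr, Fintype.sum_prod_type_right]
  simp only [Matrix.trace, Matrix.diag, rhoB, Matrix.of_apply, Complex.re_sum, Complex.star_def,
    Complex.mul_conj, Complex.ofReal_re, Complex.normSq_eq_norm_sq, norm_regEmb,
    Real.sq_sqrt (hP _)]

theorem eigenvalues_rhoB_nonneg [DecidableEq Y] (P θ : X × Y → ℝ)
    (h : (rhoB P θ).IsHermitian) (j : Y) : 0 ≤ h.eigenvalues j := by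
  open scoped ComplexOrder in
  exact (rhoB_eq_mul_conjTranspose P θ ▸
    Matrix.posSemidef_self_mul_conjTranspose (regEmbMatrix P θ) :
      (rhoB P θ).PosSemidef).eigenvalues_nonneg j

/-- A uniform gap of the phase-independent remainder on `[a, b]` bounds the leakage below. -/
theorem mul_sub_le_leakReg_mul_log (hP : ∀ xy, 0 ≤ P xy) (θ : X × Y → ℝ) (x x' : X) (y z : Y)
    {a b c : ℝ} (ha : 0 < a) (hab : a ≤ b)
    (hgap : ∀ t ∈ Set.Icc a b, c ≤ (√(P (x, y)) * (resolventWeight P t x z * √(P (x', z))) -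
      √(P (x, z)) * (resolventWeight P t x y * √(P (x', y)))) ^ 2) :
    c * (b - a) ≤ leakReg P θ * Real.log 2 := by
  classical
  have hH : (rhoB P θ).IsHermitian := by
    rw [rhoB_eq_mul_conjTranspose]
    exact Matrix.isHermitian_mul_conjTranspose_self _
  have hkey := sum_mul_log_add_le_of_resolvent (l := hH.eigenvalues) (p := P)
    (r := fun xy => margX P xy.1 * margY P xy.2 / P xy) (c := c)
    (eigenvalues_rhoB_nonneg P θ hH) hP
    (fun xy => div_nonneg (mul_nonneg (margX_nonneg hP _) (margY_nonneg hP _)) (hP _))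
    (fun xy h => div_ne_zero (margX_mul_margY_pos hP h).ne' h)
    (sum_eigenvalues_rhoB hP θ hH) ha hab
    (fun t ht => le_of_add_le_of_nonneg_left
      (sum_mul_resolventWeight_add_sq_le hP θ hH ht x x' y z) (sq_nonneg _))
    (fun t ht => (by gcongr; exact hgap t ht : _ ≤ _).trans
      (sum_mul_resolventWeight_add_sq_le hP θ hH (ha.trans_le ht.1) x x' y z))
  have hlog : Real.log 2 ≠ 0 := (Real.log_pos one_lt_two).ne'
  have e₁ : vNE (rhoB P θ) * Real.log 2 =
      -∑ j, hH.eigenvalues j * Real.log (hH.eigenvalues j) := by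
    have hv : vNE (rhoB P θ) = -∑ j, hH.eigenvalues j * Real.logb 2 (hH.eigenvalues j) := by
      rw [vNE, dif_pos hH]
    rw [hv, neg_mul, Finset.sum_mul]
    congr 1
    refine Finset.sum_congr rfl fun j _ => ?_
    rw [Real.logb]
    field_simp
  have e₂ : mutualInfo P * Real.log 2 =
      -∑ xy : X × Y, P xy * Real.log (margX P xy.1 * margY P xy.2 / P xy) := by
    rw [mutualInfo, Fintype.sum_prod_type, Finset.sum_mul, ← Finset.sum_neg_distrib]
    refine Finset.sum_congr rfl fun x _ => ?_
    rw [Finset.sum_mul, ← Finset.sum_neg_distrib]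
    refine Finset.sum_congr rfl fun y _ => ?_
    rw [← inv_div (P (x, y)), Real.log_inv, Real.logb]
    field_simp
  rw [leakReg, sub_mul, e₁, e₂]
  linarith

/-- If the leakage of `P` vanishes, the phase-independent remainder vanishes identically. -/
theorem remainder_eq_zero_of_leakPrim_eq_zero (hP : ∀ xy, 0 ≤ P xy) (hleak : leakPrim P = 0)
    (x x' : X) (y z : Y) {t : ℝ} (ht : 0 < t) :
    √(P (x, y)) * (resolventWeight P t x z * √(P (x', z))) =
      √(P (x, z)) * (resolventWeight P t x y * √(P (x', y))) := by
  by_contra hne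
  set s : ℝ → ℝ := fun t => (√(P (x, y)) * (resolventWeight P t x z * √(P (x', z))) -
      √(P (x, z)) * (resolventWeight P t x y * √(P (x', y)))) ^ 2 with hs
  have hw : ∀ i, ContinuousAt (fun t => resolventWeight P t x i) t := by
    intro i
    rcases eq_or_ne (P (x, i)) 0 with h | h
    · simpa [resolventWeight, h] using continuousAt_const
    · have h₁ := margX_mul_margY_pos hP h
      have h₂ := hP (x, i)
      refine ContinuousAt.div (by fun_prop) (by fun_prop) ?_
      positivity
  have hcont : ContinuousAt s t :=
    ((continuousAt_const.mul ((hw z).mul continuousAt_const)).sub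
      (continuousAt_const.mul ((hw y).mul continuousAt_const))).pow 2
  have hst : 0 < s t := by
    have := sub_ne_zero.2 hne
    positivity
  obtain ⟨b, hb, hsub⟩ := (mem_nhdsGE_iff_exists_Icc_subset).1
    (mem_nhdsWithin_of_mem_nhds (t := Set.Ici t)
      (hcont.eventually (lt_mem_nhds (half_lt_self hst))))
  have hbt : t < b := hb
  have hpos : 0 < s t / 2 * (b - t) / Real.log 2 :=
    div_pos (mul_pos (half_pos hst) (sub_pos.2 hbt)) (Real.log_pos one_lt_two)
  obtain ⟨θ, hθ⟩ := exists_lt_of_ciInf_lt (hleak.trans_lt hpos)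
  have hge := mul_sub_le_leakReg_mul_log hP θ x x' y z ht hbt.le
    fun u hu => (hsub hu : s t / 2 < s u).le
  rw [lt_div_iff₀ (Real.log_pos one_lt_two)] at hθ
  exact absurd hge (not_le.2 hθ)

/-- Rows of `P` that meet in some column are proportional. -/
theorem mul_eq_mul_of_leakPrim_eq_zero (hP : ∀ xy, 0 ≤ P xy) (hleak : leakPrim P = 0)
    {x : X} (x' : X) {y z : Y} (hy : P (x, y) ≠ 0) (hz : P (x, z) ≠ 0) :
    P (x, y) * P (x', z) = P (x, z) * P (x', y) := by
  have hy0 := (hP (x, y)).lt_of_ne' hy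
  have hz0 := (hP (x, z)).lt_of_ne' hz
  have hay := margX_mul_margY_pos hP hy
  have haz := margX_mul_margY_pos hP hz
  have h : ∀ t : ℝ, 0 < t → √(P (x', z)) * √(P (x, z)) * (margX P x * margY P y + t * P (x, y)) =
      √(P (x', y)) * √(P (x, y)) * (margX P x * margY P z + t * P (x, z)) := by
    intro t ht
    have := remainder_eq_zero_of_leakPrim_eq_zero hP hleak x x' y z ht
    have hdy : margX P x * margY P y + t * P (x, y) ≠ 0 := by positivity
    have hdz : margX P x * margY P z + t * P (x, z) ≠ 0 := by positivity
    have hsy := Real.sqrt_pos.2 hy0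
    have hsz := Real.sqrt_pos.2 hz0
    have hqy := Real.mul_self_sqrt hy0.le
    have hqz := Real.mul_self_sqrt hz0.le
    rw [resolventWeight, resolventWeight, div_mul_eq_mul_div, div_mul_eq_mul_div, mul_div_assoc',
      mul_div_assoc', div_eq_div_iff hdz hdy] at this
    refine mul_left_cancel₀ (mul_pos hsy hsz).ne' ?_
    linear_combination this +
      (√(P (x, y)) * √(P (x', z)) * (margX P x * margY P y + t * P (x, y))) * hqz -
      (√(P (x, z)) * √(P (x', y)) * (margX P x * margY P z + t * P (x, z))) * hqy
  have h₁ := h 1 one_pos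
  have h₂ := h 2 two_pos
  have h₃ : √(P (x', z)) * √(P (x, z)) * P (x, y) = √(P (x', y)) * √(P (x, y)) * P (x, z) := by
    linear_combination h₂ - h₁
  have h₄ := congrArg (fun u => u ^ 2) h₃
  simp only [mul_pow, Real.sq_sqrt (hP _)] at h₄
  refine mul_left_cancel₀ (mul_pos hy0 hz0).ne' ?_
  linear_combination h₄

theorem fX_eq_of_leakPrim_eq_zero (hP : ∀ xy, 0 ≤ P xy) (hleak : leakPrim P = 0)
    {x x' : X} {y : Y} (hx : P (x, y) ≠ 0) (hx' : P (x', y) ≠ 0) : fX P x = fX P x' := by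
  have hprop : ∀ z, P (x, y) * P (x', z) = P (x, z) * P (x', y) := by
    intro z
    by_cases hz : P (x, z) = 0
    · by_cases hz' : P (x', z) = 0
      · simp [hz, hz']
      · linear_combination -mul_eq_mul_of_leakPrim_eq_zero hP hleak x hx' hz'
    · exact mul_eq_mul_of_leakPrim_eq_zero hP hleak x' hx hz
  have hmarg : P (x, y) * margX P x' = margX P x * P (x', y) := by
    simp only [margX, Finset.mul_sum, Finset.sum_mul, hprop]
  have hm := ((hP (x, y)).lt_of_ne' hx).trans_le (le_margX hP x y)
  have hm' := ((hP (x', y)).lt_of_ne' hx').trans_le (le_margX hP x' y)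
  funext z
  rw [fX, fX, div_eq_div_iff hm.ne' hm'.ne']
  refine mul_left_cancel₀ (mul_ne_zero hx hx') ?_
  linear_combination P (x, z) * P (x', y) * hmarg - margX P x * P (x', y) * hprop z

/-- If the dependent part of `X` is determined by `Y`, its conditional entropy vanishes. -/
theorem condEntDep_eq_zero_of_fX_eq
    (h : ∀ x x' y, P (x, y) ≠ 0 → P (x', y) ≠ 0 → fX P x = fX P x') : condEntDep P = 0 := by
  classical
  rw [condEntDep, entDepJoint, shannon, sub_eq_zero, neg_inj, Finset.sum_comm]
  refine Finset.sum_congr rfl fun y _ => ?_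
  by_cases hy : ∀ x, P (x, y) = 0
  · simp [margY, hy]
  · obtain ⟨x₀, hx₀⟩ := not_forall.1 hy
    rw [Finset.sum_eq_single_of_mem (fX P x₀) (Finset.mem_image_of_mem _ (Finset.mem_univ _))]
    · have : ∑ x ∈ Finset.univ.filter (fun x => fX P x = fX P x₀), P (x, y) = margY P y := by
        rw [margY]
        refine Finset.sum_subset (Finset.filter_subset _ _) fun x _ hx => ?_
        by_contra hne
        exact hx (Finset.mem_filter.2 ⟨Finset.mem_univ _, h x x₀ y hne hx₀⟩)
      convert rfl using 2 <;> simp [← this]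
    · intro k _ hk
      have : ∑ x ∈ Finset.univ.filter (fun x => fX P x = k), P (x, y) = 0 := by
        refine Finset.sum_eq_zero fun x hx => ?_
        by_contra hne
        exact hk ((Finset.mem_filter.1 hx).2 ▸ h x x₀ y hne hx₀)
      convert zero_mul _ using 2

end Primitive

/-- If the leakage `Δ_P` of a primitive `P` (the infimum over all phase
functions of the leakage of the corresponding regular embedding) equals `0`, then `P` is
trivial, i.e. `H(X↘Y|Y) = 0`. -/
theorem leakPrim_eq_zero_implies_trivial
    {𝒳 𝒴 : Type*} [Fintype 𝒳] [Fintype 𝒴] [Nonempty 𝒳] [Nonempty 𝒴]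
    (P : 𝒳 × 𝒴 → ℝ) (hP0 : ∀ xy, 0 ≤ P xy) (hP1 : ∑ xy, P xy = 1)
    (hleak : leakPrim P = 0) :
    condEntDep P = 0 := by
  exact condEntDep_eq_zero_of_fX_eq fun _ _ _ => fX_eq_of_leakPrim_eq_zero hP0 hleak
end
end

section
/- For any primitive P on a finite product 𝒳×𝒴, the leakage of P is at least the leakage of the primitive of its dependent parts: Δ_P ≥ Δ_{P↘}, where P↘ is the joint distribution of the pair (f_X(X), f_Y(Y)), i.e. the distribution on the (finite) image of f_X times the image of f_Y given by P↘(k,l) = Σ_{x,y : f_X(x)=k, f_Y(y)=l} P(x,y). -/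
open scoped BigOperators
open Matrix

noncomputable section

open scoped Classical in
/-- The primitive `P↘` of the dependent parts: the joint distribution of
`(f_X(X), f_Y(Y))`, on the image of `f_X` times the image of `f_Y`. -/
def depPrim {𝒳 𝒴 : Type*} [Fintype 𝒳] [Fintype 𝒴] (P : 𝒳 × 𝒴 → ℝ) :
    (↥(Finset.image (fX P) Finset.univ) × ↥(Finset.image (fY P) Finset.univ)) → ℝ :=
  fun kl => ∑ x ∈ Finset.univ.filter fun x => fX P x = (kl.1 : 𝒴 → ℝ),
      ∑ y ∈ Finset.univ.filter fun y => fY P y = (kl.2 : 𝒳 → ℝ), P (x, y)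

section Entropy

open scoped ComplexOrder

open scoped Classical in
lemma vNE_eq_sum_negMulLog {n : Type*} [Fintype n] {ρ : Matrix n n ℂ} (h : ρ.IsHermitian) :
    vNE ρ = ∑ i, Real.negMulLog (h.eigenvalues i) / Real.log 2 := by
  rw [vNE, dif_pos h, ← Finset.sum_neg_distrib]
  refine Finset.sum_congr rfl fun i _ => ?_
  simp only [Real.negMulLog, Real.logb]
  ring

open scoped Classical in
lemma vNE_eq_sum_roots_charpoly {n : Type*} [Fintype n] {ρ : Matrix n n ℂ} (h : ρ.IsHermitian) :
    vNE ρ = (ρ.charpoly.roots.map fun z => Real.negMulLog z.re / Real.log 2).sum := by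
  rw [vNE_eq_sum_negMulLog h, h.roots_charpoly_eq_eigenvalues, Multiset.map_map]
  rfl

lemma vNE_transpose {n : Type*} [Fintype n] {ρ : Matrix n n ℂ} (h : ρ.IsHermitian) :
    vNE ρᵀ = vNE ρ := by
  classical
  rw [vNE_eq_sum_roots_charpoly h, vNE_eq_sum_roots_charpoly h.transpose, charpoly_transpose]

/-- The two Gram matrices of a rectangular matrix have the same entropy. -/
lemma vNE_conjTranspose_mul_self {m n : Type*} [Fintype m] [Fintype n] (M : Matrix m n ℂ) :
    vNE (Mᴴ * M) = vNE (M * Mᴴ) := by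
  classical
  have hroots := congrArg Polynomial.roots (charpoly_mul_comm' M Mᴴ)
  rw [Polynomial.roots_mul (((Polynomial.monic_X_pow _).mul (charpoly_monic _)).ne_zero),
    Polynomial.roots_mul (((Polynomial.monic_X_pow _).mul (charpoly_monic _)).ne_zero)] at hroots
  have hsum := congrArg
    (fun s => (s.map fun z : ℂ => Real.negMulLog z.re / Real.log 2).sum) hroots
  simp only [Multiset.map_add, Multiset.sum_add, Polynomial.roots_X_pow, Multiset.map_nsmul,
    Multiset.sum_nsmul, Multiset.map_singleton, Multiset.sum_singleton, Complex.zero_re,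
    Real.negMulLog_zero, zero_div, smul_zero, zero_add] at hsum
  rw [vNE_eq_sum_roots_charpoly (isHermitian_conjTranspose_mul_self M),
    vNE_eq_sum_roots_charpoly (isHermitian_mul_conjTranspose_self M), hsum]

open scoped Classical in
/-- Measuring in the eigenbasis attains the entropy. -/
lemma exists_vNE_eq_sum_diag {n : Type*} [Fintype n] {ρ : Matrix n n ℂ} (h : ρ.IsHermitian) :
    ∃ U ∈ unitaryGroup n ℂ,
      vNE ρ = ∑ i, Real.negMulLog ((star U * ρ * U) i i).re / Real.log 2 := by
  refine ⟨h.eigenvectorUnitary, h.eigenvectorUnitary.2, ?_⟩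
  have hdiag := h.conjStarAlgAut_star_eigenvectorUnitary
  rw [Unitary.conjStarAlgAut_star_apply] at hdiag
  rw [hdiag, vNE_eq_sum_negMulLog h]
  simp

open scoped Classical in
/-- Measuring in any orthonormal basis does not decrease the entropy. -/
lemma vNE_le_sum_diag {n : Type*} [Fintype n] {σ : Matrix n n ℂ} (h : σ.PosSemidef)
    {U : Matrix n n ℂ} (hU : U ∈ unitaryGroup n ℂ) :
    vNE σ ≤ ∑ i, Real.negMulLog ((star U * σ * U) i i).re / Real.log 2 := by
  set V : Matrix n n ℂ := (h.1.eigenvectorUnitary).1 with hV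
  have hVmem : V ∈ unitaryGroup n ℂ := h.1.eigenvectorUnitary.2
  set W := star U * V with hW
  have hWmem : W ∈ unitaryGroup n ℂ := mul_mem (Unitary.star_mem hU) hVmem
  have hσ : star U * σ * U
      = W * diagonal (RCLike.ofReal ∘ h.1.eigenvalues) * star W := by
    conv_lhs => rw [h.1.spectral_theorem, Unitary.conjStarAlgAut_apply]
    simp only [hW, star_mul, star_star, Matrix.mul_assoc, hV]
  have hrow (i : n) : ∑ j, Complex.normSq (W i j) = 1 := by
    have := congrFun (congrFun (mem_unitaryGroup_iff.1 hWmem) i) i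
    rw [mul_apply, one_apply_eq] at this
    have := congrArg Complex.re this
    simpa [star_apply, Complex.mul_conj, Complex.normSq_apply] using this
  have hcol (j : n) : ∑ i, Complex.normSq (W i j) = 1 := by
    have := congrFun (congrFun (mem_unitaryGroup_iff'.1 hWmem) j) j
    rw [mul_apply, one_apply_eq] at this
    have := congrArg Complex.re this
    simpa [star_apply, Complex.mul_conj, Complex.normSq_apply] using this
  have hentry (i : n) : ((star U * σ * U) i i).re
      = ∑ j, Complex.normSq (W i j) • h.1.eigenvalues j := by
    rw [hσ, mul_apply, Complex.re_sum]
    refine Finset.sum_congr rfl fun j _ => ?_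
    rw [mul_diagonal, star_apply]
    simp [Complex.normSq_apply]
    ring
  rw [vNE_eq_sum_negMulLog h.1, ← Finset.sum_div, ← Finset.sum_div]
  refine div_le_div_of_nonneg_right ?_ (Real.log_nonneg one_le_two)
  calc ∑ j, Real.negMulLog (h.1.eigenvalues j)
      = ∑ j, ∑ i, Complex.normSq (W i j) • Real.negMulLog (h.1.eigenvalues j) := by
        simp [← Finset.sum_mul, hcol]
    _ = ∑ i, ∑ j, Complex.normSq (W i j) • Real.negMulLog (h.1.eigenvalues j) :=
        Finset.sum_comm
    _ ≤ _ := by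
        refine Finset.sum_le_sum fun i _ => ?_
        rw [hentry]
        exact Real.concaveOn_negMulLog.le_map_sum (fun j _ => Complex.normSq_nonneg _) (hrow i)
          fun j _ => h.eigenvalues_nonneg j

/-- The von Neumann entropy is concave on positive semidefinite matrices. -/
lemma concaveOn_vNE {n : Type*} [Fintype n] :
    ConcaveOn ℝ {ρ : Matrix n n ℂ | ρ.PosSemidef} vNE := by
  classical
  have hconv {σ τ : Matrix n n ℂ} (hσ : σ.PosSemidef) (hτ : τ.PosSemidef) {a b : ℝ}
      (ha : 0 ≤ a) (hb : 0 ≤ b) : (a • σ + b • τ).PosSemidef :=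
    (hσ.smul ha).add (hτ.smul hb)
  refine ⟨fun σ hσ τ hτ a b ha hb _ => hconv hσ hτ ha hb, ?_⟩
  intro σ hσ τ hτ a b ha hb hab
  obtain ⟨U, hU, hρ⟩ := exists_vNE_eq_sum_diag (hconv hσ hτ ha hb).1
  have hdiag {ρ : Matrix n n ℂ} (h : ρ.PosSemidef) (i : n) :
      0 ≤ ((star U * ρ * U) i i).re :=
    (Complex.le_def.1 (h.conjTranspose_mul_mul_same U).diag_nonneg).1
  rw [hρ]
  calc a • vNE σ + b • vNE τ
      ≤ a • (∑ i, Real.negMulLog ((star U * σ * U) i i).re / Real.log 2)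
        + b • (∑ i, Real.negMulLog ((star U * τ * U) i i).re / Real.log 2) := by
        simp only [smul_eq_mul]
        exact add_le_add (mul_le_mul_of_nonneg_left (vNE_le_sum_diag hσ hU) ha)
          (mul_le_mul_of_nonneg_left (vNE_le_sum_diag hτ hU) hb)
    _ = ∑ i, (a • Real.negMulLog ((star U * σ * U) i i).re
        + b • Real.negMulLog ((star U * τ * U) i i).re) / Real.log 2 := by
        simp only [smul_eq_mul, Finset.mul_sum, ← Finset.sum_add_distrib]
        exact Finset.sum_congr rfl fun i _ => by ring
    _ ≤ _ := by
        refine Finset.sum_le_sum fun i _ =>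
          div_le_div_of_nonneg_right ?_ (Real.log_nonneg one_le_two)
        have hlin : ((star U * (a • σ + b • τ) * U) i i).re
            = a • ((star U * σ * U) i i).re + b • ((star U * τ * U) i i).re := by
          simp [Matrix.mul_add, Matrix.add_mul]
        rw [hlin]
        exact Real.concaveOn_negMulLog.2 (hdiag hσ i) (hdiag hτ i) ha hb hab

lemma vNE_nonneg {n : Type*} [Fintype n] {ρ : Matrix n n ℂ} (h : ρ.PosSemidef)
    (htr : ρ.trace = 1) : 0 ≤ vNE ρ := by
  classical
  have hsum : ∑ i, h.1.eigenvalues i = 1 := by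
    have := congrArg Complex.re (htr.symm.trans h.1.trace_eq_sum_eigenvalues)
    simpa using this.symm
  rw [vNE_eq_sum_negMulLog h.1]
  refine Finset.sum_nonneg fun i _ => div_nonneg
    (Real.negMulLog_nonneg (h.eigenvalues_nonneg i) ?_) (Real.log_nonneg one_le_two)
  rw [← hsum]
  exact Finset.single_le_sum (fun j _ => h.eigenvalues_nonneg j) (Finset.mem_univ i)

end Entropy

section Embedding

open scoped ComplexOrder

lemma rhoB_eq_transpose {X Y : Type*} [Fintype X] (P θ : X × Y → ℝ) :
    rhoB P θ = ((Matrix.of fun x y => regEmb P θ (x, y))ᴴ *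
      Matrix.of fun x y => regEmb P θ (x, y))ᵀ := by
  ext y y'
  simp [rhoB, mul_apply, mul_comm]

lemma rhoA_eq {X Y : Type*} [Fintype Y] (P θ : X × Y → ℝ) :
    rhoA P θ = (Matrix.of fun x y => regEmb P θ (x, y)) *
      (Matrix.of fun x y => regEmb P θ (x, y))ᴴ := by
  ext x x'
  simp [rhoA, mul_apply]

variable {X Y : Type*} [Fintype X] [Fintype Y]

lemma posSemidef_rhoB (P θ : X × Y → ℝ) : (rhoB P θ).PosSemidef := by
  rw [rhoB_eq_transpose]
  exact (posSemidef_conjTranspose_mul_self _).transpose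

lemma trace_rhoB {P : X × Y → ℝ} (hP0 : ∀ xy, 0 ≤ P xy) (hP1 : ∑ xy, P xy = 1)
    (θ : X × Y → ℝ) : (rhoB P θ).trace = 1 := by
  have hsq (xy : X × Y) : regEmb P θ xy * star (regEmb P θ xy) = (P xy : ℂ) := by
    rw [Complex.star_def, Complex.mul_conj, Complex.normSq_eq_norm_sq, regEmb, norm_mul,
      mul_comm Complex.I, Complex.norm_exp_ofReal_mul_I, one_mul, Complex.norm_real,
      Real.norm_eq_abs, sq_abs, Real.sq_sqrt (hP0 xy)]
  rw [← Complex.ofReal_one, ← hP1, Fintype.sum_prod_type_right]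
  simp only [trace, diag_apply, rhoB, of_apply, hsq, Complex.ofReal_sum]

/-- The two reduced states of a regular embedding have the same entropy. -/
lemma vNE_rhoA_eq_vNE_rhoB (P θ : X × Y → ℝ) : vNE (rhoA P θ) = vNE (rhoB P θ) := by
  rw [rhoA_eq, rhoB_eq_transpose, vNE_transpose (isHermitian_conjTranspose_mul_self _),
    vNE_conjTranspose_mul_self]

lemma mutualInfo_swap (P : X × Y → ℝ) : mutualInfo (P ∘ Prod.swap) = mutualInfo P := by
  rw [mutualInfo, Finset.sum_comm]
  simp only [mutualInfo, margX, margY, Function.comp_apply, Prod.swap_prod_mk, mul_comm]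

lemma leakReg_swap (P θ : X × Y → ℝ) :
    leakReg (P ∘ Prod.swap) (θ ∘ Prod.swap) = leakReg P θ := by
  rw [leakReg, leakReg, mutualInfo_swap, ← vNE_rhoA_eq_vNE_rhoB P θ]
  rfl

lemma leakPrim_swap (P : X × Y → ℝ) : leakPrim (P ∘ Prod.swap) = leakPrim P :=
  (((Equiv.prodComm Y X).arrowCongr (Equiv.refl ℝ)).symm.iInf_congr fun θ =>
    leakReg_swap P θ).symm

lemma bddBelow_leakReg {P : X × Y → ℝ} (hP0 : ∀ xy, 0 ≤ P xy) (hP1 : ∑ xy, P xy = 1) :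
    BddBelow (Set.range (leakReg P)) := by
  refine ⟨-mutualInfo P, ?_⟩
  rintro _ ⟨θ, rfl⟩
  have := vNE_nonneg (posSemidef_rhoB P θ) (trace_rhoB hP0 hP1 θ)
  rw [leakReg]
  linarith

end Embedding

section Merge

open scoped Pointwise

variable {X K Y : Type*} [Fintype X] [Fintype K] [DecidableEq K] [Fintype Y]
  {P : X × Y → ℝ} {Q : K × Y → ℝ} {f : X → K} {w : X → ℝ}

lemma sum_mul_comp_eq (hw1 : ∀ k, ∑ x with f x = k, w x = 1) (g : K → ℝ) :
    ∑ x, w x * g (f x) = ∑ k, g k := by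
  rw [← Finset.sum_fiberwise Finset.univ f]
  refine Finset.sum_congr rfl fun k _ => ?_
  rw [← one_mul (g k), ← hw1 k, Finset.sum_mul]
  exact Finset.sum_congr rfl fun x hx => by rw [(Finset.mem_filter.1 hx).2]

/-- Splitting every symbol `k` into copies `x` with conditional probabilities `w x`
preserves the mutual information. -/
lemma mutualInfo_eq_of_merge (hw1 : ∀ k, ∑ x with f x = k, w x = 1)
    (hPQ : ∀ x y, P (x, y) = w x * Q (f x, y)) : mutualInfo P = mutualInfo Q := by
  have hX (x : X) : margX P x = w x * margX Q (f x) := by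
    simp only [margX, hPQ, Finset.mul_sum]
  have hY (y : Y) : margY P y = margY Q y := by
    simp only [margY, hPQ]
    exact sum_mul_comp_eq hw1 fun k => Q (k, y)
  rw [mutualInfo, mutualInfo, ← sum_mul_comp_eq hw1]
  refine Finset.sum_congr rfl fun x _ => ?_
  rw [Finset.mul_sum]
  refine Finset.sum_congr rfl fun y _ => ?_
  rw [hX, hY, hPQ]
  rcases eq_or_ne (w x) 0 with h0 | h0
  · simp [h0]
  · rw [mul_assoc (w x) (margX Q (f x)), mul_div_mul_left _ _ h0, mul_assoc]

/-- Merging symbols with proportional rows does not increase the entropy of the reduced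
state, for a suitable choice of phases. -/
lemma exists_vNE_rhoB_le_of_merge (hw0 : ∀ x, 0 ≤ w x) (hw1 : ∀ k, ∑ x with f x = k, w x = 1)
    (hPQ : ∀ x y, P (x, y) = w x * Q (f x, y)) (θ : X × Y → ℝ) :
    ∃ θ' : K × Y → ℝ, vNE (rhoB Q θ') ≤ vNE (rhoB P θ) := by
  set v : X → Y → ℂ := fun x y =>
    Complex.exp (Complex.I * θ (x, y)) * (Real.sqrt (Q (f x, y)) : ℂ) with hv
  set R : X → Matrix Y Y ℂ := fun x => Matrix.of fun y y' => v x y * star (v x y')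
  have hRapply (x : X) (y y' : Y) : R x y y' = v x y * star (v x y') := rfl
  have hP : rhoB P θ = ∑ k, ∑ x with f x = k, w x • R x := by
    rw [Finset.sum_fiberwise]
    ext y y'
    rw [Matrix.sum_apply]
    refine Finset.sum_congr rfl fun x _ => ?_
    have hsq : (Real.sqrt (w x) : ℂ) * (Real.sqrt (w x) : ℂ) = w x := by
      rw [← Complex.ofReal_mul, Real.mul_self_sqrt (hw0 x)]
    have hemb (y : Y) : regEmb P θ (x, y) = (Real.sqrt (w x) : ℂ) * v x y := by
      rw [regEmb, hPQ, Real.sqrt_mul (hw0 x), Complex.ofReal_mul, hv]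
      ring
    rw [hemb, hemb, Matrix.smul_apply, hRapply, Complex.real_smul, star_mul', Complex.star_def,
      Complex.conj_ofReal, ← hsq]
    ring
  set S : K → Set (Matrix Y Y ℂ) := fun k => R '' {x | f x = k}
  have hmem : rhoB P θ ∈ convexHull ℝ (∑ k, S k) := by
    rw [hP, convexHull_sum]
    refine (Set.mem_fintype_sum _ _).2 ⟨_, fun k => ?_, rfl⟩
    refine (convex_convexHull ℝ (S k)).sum_mem (fun x _ => hw0 x) (hw1 k) fun x hx => ?_
    exact subset_convexHull ℝ _ ⟨x, (Finset.mem_filter.1 hx).2, rfl⟩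
  have hsum : ∀ ρ ∈ ∑ k, S k, ∃ θ' : K × Y → ℝ, rhoB Q θ' = ρ := by
    intro ρ hρ
    obtain ⟨g, hg, rfl⟩ := (Set.mem_fintype_sum _ _).1 hρ
    choose c hc hcg using hg
    refine ⟨fun ky => θ (c ky.1, ky.2), ?_⟩
    ext y y'
    rw [Matrix.sum_apply]
    refine Finset.sum_congr rfl fun k _ => ?_
    rw [← hcg k, hRapply, hv]
    simp only [regEmb, show f (c k) = k from hc k]
  obtain ⟨ρ, hρ, hle⟩ := concaveOn_vNE.exists_le_of_mem_convexHull (fun ρ hρ => by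
    obtain ⟨θ', rfl⟩ := hsum ρ hρ
    exact posSemidef_rhoB Q θ') hmem
  obtain ⟨θ', rfl⟩ := hsum ρ hρ
  exact ⟨θ', hle⟩

lemma leakPrim_le_of_merge (hQ0 : ∀ ky, 0 ≤ Q ky) (hQ1 : ∑ ky, Q ky = 1)
    (hw0 : ∀ x, 0 ≤ w x) (hw1 : ∀ k, ∑ x with f x = k, w x = 1)
    (hPQ : ∀ x y, P (x, y) = w x * Q (f x, y)) : leakPrim Q ≤ leakPrim P := by
  refine le_ciInf fun θ => ?_
  obtain ⟨θ', hθ'⟩ := exists_vNE_rhoB_le_of_merge hw0 hw1 hPQ θ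
  refine (ciInf_le (bddBelow_leakReg hQ0 hQ1) θ').trans ?_
  rw [leakReg, leakReg, mutualInfo_eq_of_merge hw1 hPQ]
  exact sub_le_sub_right hθ' _

end Merge

/-- Conditional probabilities within the fibres of a surjection. -/
lemma exists_fiber_weights {X K : Type*} [Fintype X] [DecidableEq K] {f : X → K}
    (hf : Function.Surjective f) {m : X → ℝ} (hm : ∀ x, 0 ≤ m x) :
    ∃ w : X → ℝ, (∀ x, 0 ≤ w x) ∧ (∀ k, ∑ x with f x = k, w x = 1) ∧
      ∀ x, m x = w x * ∑ x' with f x' = f x, m x' := by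
  set D : K → ℝ := fun k => ∑ x with f x = k, m x
  have hD0 (k : K) : 0 ≤ D k := Finset.sum_nonneg fun x _ => hm x
  refine ⟨fun x => if D (f x) = 0 then ((Finset.univ.filter fun x' => f x' = f x).card : ℝ)⁻¹
    else m x / D (f x), fun x => ?_, fun k => ?_, fun x => ?_⟩
  · dsimp only
    split_ifs
    · positivity
    · exact div_nonneg (hm x) (hD0 _)
  · rw [Finset.sum_congr rfl (g := fun x => if D k = 0 then
      ((Finset.univ.filter fun x' => f x' = k).card : ℝ)⁻¹ else m x / D k)
      fun x hx => by simp only [(Finset.mem_filter.1 hx).2]]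
    split_ifs with h
    · obtain ⟨x, hx⟩ := hf k
      have hcard : ((Finset.univ.filter fun x' => f x' = k).card : ℝ) ≠ 0 :=
        Nat.cast_ne_zero.2 (Finset.card_ne_zero_of_mem (a := x) (by simp [hx]))
      rw [Finset.sum_const, nsmul_eq_mul, mul_inv_cancel₀ hcard]
    · rw [← Finset.sum_div]
      exact div_self h
  · change m x = (if D (f x) = 0 then _ else _) * D (f x)
    split_ifs with h
    · rw [h, mul_zero]
      exact (Finset.sum_eq_zero_iff_of_nonneg fun x _ => hm x).1 h x (by simp)
    · rw [div_mul_cancel₀ _ h]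

lemma eq_fX_mul_margX {X Y : Type*} [Fintype Y] {P : X × Y → ℝ}
    (hP0 : ∀ xy, 0 ≤ P xy) (x : X) (y : Y) :
    P (x, y) = fX P x y * margX P x := by
  rw [fX]
  refine (div_mul_cancel_of_imp fun h => ?_).symm
  exact (Finset.sum_eq_zero_iff_of_nonneg fun y _ => hP0 (x, y)).1 h y (Finset.mem_univ y)

lemma eq_fY_mul_margY {X Y : Type*} [Fintype X] {P : X × Y → ℝ}
    (hP0 : ∀ xy, 0 ≤ P xy) (x : X) (y : Y) :
    P (x, y) = fY P y x * margY P y := by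
  rw [fY]
  refine (div_mul_cancel_of_imp fun h => ?_).symm
  exact (Finset.sum_eq_zero_iff_of_nonneg fun x _ => hP0 (x, y)).1 h x (Finset.mem_univ x)

/-- For any primitive `P`, the leakage of `P` is at least the leakage of
the primitive `P↘` of its dependent parts: `Δ_P ≥ Δ_{P↘}`. -/
theorem leakPrim_ge_leakPrim_depPrim
    {𝒳 𝒴 : Type*} [Fintype 𝒳] [Fintype 𝒴] [Nonempty 𝒳] [Nonempty 𝒴]
    (P : 𝒳 × 𝒴 → ℝ) (hP0 : ∀ xy, 0 ≤ P xy) (hP1 : ∑ xy, P xy = 1) :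
    leakPrim (depPrim P) ≤ leakPrim P := by
  classical
  set f : 𝒳 → ↥(Finset.image (fX P) Finset.univ) :=
    fun x => ⟨fX P x, Finset.mem_image_of_mem _ (Finset.mem_univ x)⟩ with hf
  set g : 𝒴 → ↥(Finset.image (fY P) Finset.univ) :=
    fun y => ⟨fY P y, Finset.mem_image_of_mem _ (Finset.mem_univ y)⟩ with hg
  have hfs : Function.Surjective f := by
    rintro ⟨k, hk⟩
    obtain ⟨x, -, rfl⟩ := Finset.mem_image.1 hk
    exact ⟨x, rfl⟩
  have hgs : Function.Surjective g := by
    rintro ⟨l, hl⟩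
    obtain ⟨y, -, rfl⟩ := Finset.mem_image.1 hl
    exact ⟨y, rfl⟩
  set Q : ↥(Finset.image (fX P) Finset.univ) × 𝒴 → ℝ :=
    fun ky => ∑ x with f x = ky.1, P (x, ky.2) with hQ
  have hdep (k l) : depPrim P (k, l) = ∑ y with g y = l, Q (k, y) := by
    simp only [hQ, depPrim, hf, hg, Subtype.ext_iff]
    exact Finset.sum_comm
  have hQ0 (ky) : 0 ≤ Q ky := Finset.sum_nonneg fun x _ => hP0 _
  have hQ1 : ∑ ky, Q ky = 1 := by
    rw [← hP1, Fintype.sum_prod_type_right, Fintype.sum_prod_type_right]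
    exact Finset.sum_congr rfl fun y _ => Finset.sum_fiberwise Finset.univ f fun x => P (x, y)
  have hdep0 (kl) : 0 ≤ depPrim P kl :=
    (hdep kl.1 kl.2).symm ▸ Finset.sum_nonneg fun y _ => hQ0 _
  have hdep1 : ∑ kl, depPrim P kl = 1 := by
    rw [← hQ1, Fintype.sum_prod_type, Fintype.sum_prod_type]
    refine Finset.sum_congr rfl fun k _ => ?_
    simp only [hdep]
    exact Finset.sum_fiberwise Finset.univ g fun y => Q (k, y)
  have hX : leakPrim Q ≤ leakPrim P := by
    obtain ⟨w, hw0, hw1, hw⟩ := exists_fiber_weights hfs (m := margX P)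
      fun x => Finset.sum_nonneg fun y _ => hP0 (x, y)
    refine leakPrim_le_of_merge hQ0 hQ1 hw0 hw1 fun x y => ?_
    have hrow : Q (f x, y) = fX P x y * ∑ x' with f x' = f x, margX P x' := by
      rw [Finset.mul_sum]
      refine Finset.sum_congr rfl fun x' hx' => ?_
      have hclass : fX P x' = fX P x := congrArg Subtype.val (Finset.mem_filter.1 hx').2
      rw [← hclass]
      exact eq_fX_mul_margX hP0 x' y
    rw [hrow, eq_fX_mul_margX hP0 x y, hw x]
    ring
  have hY : leakPrim (depPrim P ∘ Prod.swap) ≤ leakPrim (Q ∘ Prod.swap) := by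
    obtain ⟨w, hw0, hw1, hw⟩ := exists_fiber_weights hgs (m := margY P)
      fun y => Finset.sum_nonneg fun x _ => hP0 (x, y)
    refine leakPrim_le_of_merge (fun lk => hdep0 _)
      ((Equiv.sum_comp (Equiv.prodComm _ _) (depPrim P)).trans hdep1) hw0 hw1 fun y k => ?_
    have hcol (y' : 𝒴) : Q (k, y') = (∑ x with f x = k, fY P y' x) * margY P y' := by
      rw [Finset.sum_mul]
      exact Finset.sum_congr rfl fun x _ => eq_fY_mul_margY hP0 x y'
    have hcols : depPrim P (k, g y)
        = (∑ x with f x = k, fY P y x) * ∑ y' with g y' = g y, margY P y' := by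
      rw [hdep, Finset.mul_sum]
      refine Finset.sum_congr rfl fun y' hy' => ?_
      have hclass : fY P y' = fY P y := congrArg Subtype.val (Finset.mem_filter.1 hy').2
      rw [hcol, hclass]
    simp only [Function.comp_apply, Prod.swap_prod_mk]
    rw [hcols, hcol, hw y]
    ring
  rw [leakPrim_swap, leakPrim_swap] at hY
  exact hY.trans hX
end
end
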